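/- Let K be a field of characteristic zero, α, β ∈ K with β ≠ 0, and suppose λ, μ ∈ K are the roots of t² − αt − β. In A = A(α,β,1) set ω = DU − λUD, a = (ω + μ⁻¹)(1 + U) − μ⁻¹ and b = ω² + μ⁻¹ω. Then the right ideal aA + bA of A is stably free but not free as a right A-module. -/

import Mathlib

noncomputable section

/-- Defining relations of the down-up algebra `A(α,β,γ)`:
`D = ι 0`, `U = ι 1`, relations `DU² = αUDU + βU²D + γU` and `D²U = αDUD + βUD² + γD`. -/
inductive DownUpRel (K : Type) [Field K] (a b g : K) :
    FreeAlgebra K (Fin 2) → FreeAlgebra K (Fin 2) → Prop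
  | rel1 : DownUpRel K a b g
      (FreeAlgebra.ι K (0 : Fin 2) * FreeAlgebra.ι K (1 : Fin 2) * FreeAlgebra.ι K (1 : Fin 2))
      (a • (FreeAlgebra.ι K (1 : Fin 2) * FreeAlgebra.ι K (0 : Fin 2) * FreeAlgebra.ι K (1 : Fin 2)) +
       b • (FreeAlgebra.ι K (1 : Fin 2) * FreeAlgebra.ι K (1 : Fin 2) * FreeAlgebra.ι K (0 : Fin 2)) +
       g • FreeAlgebra.ι K (1 : Fin 2))
  | rel2 : DownUpRel K a b g
      (FreeAlgebra.ι K (0 : Fin 2) * FreeAlgebra.ι K (0 : Fin 2) * FreeAlgebra.ι K (1 : Fin 2))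
      (a • (FreeAlgebra.ι K (0 : Fin 2) * FreeAlgebra.ι K (1 : Fin 2) * FreeAlgebra.ι K (0 : Fin 2)) +
       b • (FreeAlgebra.ι K (1 : Fin 2) * FreeAlgebra.ι K (0 : Fin 2) * FreeAlgebra.ι K (0 : Fin 2)) +
       g • FreeAlgebra.ι K (0 : Fin 2))

/-- The down-up algebra `A(α,β,γ)`. -/
abbrev DownUp (K : Type) [Field K] (a b g : K) := RingQuot (DownUpRel K a b g)

/-- The generator `D` of `A(α,β,γ)`. -/
def DownUp.D (K : Type) [Field K] (a b g : K) : DownUp K a b g :=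
  RingQuot.mkAlgHom K (DownUpRel K a b g) (FreeAlgebra.ι K (0 : Fin 2))

/-- The generator `U` of `A(α,β,γ)`. -/
def DownUp.U (K : Type) [Field K] (a b g : K) : DownUp K a b g :=
  RingQuot.mkAlgHom K (DownUpRel K a b g) (FreeAlgebra.ι K (1 : Fin 2))

/-- A right `A`-module `P` (realized as a left `Aᵐᵒᵖ`-module) is stably free if
`P ⊕ Aⁿ ≅ Aᵐ` as right `A`-modules for some naturals `n m`. -/
def IsStablyFreeRight (A : Type) [Ring A] (P : Type) [AddCommGroup P] [Module Aᵐᵒᵖ P] : Prop :=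
  ∃ n m : ℕ, Nonempty ((P × (Fin n → A)) ≃ₗ[Aᵐᵒᵖ] (Fin m → A))


/-! ### Module theory -/

theorem du_stablyFree_equiv {A : Type} [Ring A] (a b v1 v2 w1 w2 : A)
    (hv : a * v1 + b * v2 = 0) (hw : w1 * v1 + w2 * v2 = 1)
    (hker : ∀ f g : A, a * f + b * g = 0 →
      f = v1 * (w1 * f + w2 * g) ∧ g = v2 * (w1 * f + w2 * g)) :
    Nonempty ((Submodule.span Aᵐᵒᵖ ({a, b} : Set A) × (Fin 1 → A)) ≃ₗ[Aᵐᵒᵖ] (Fin 2 → A)) := by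
  let F : (Fin 2 → A) →ₗ[Aᵐᵒᵖ] (Submodule.span Aᵐᵒᵖ ({a, b} : Set A) × (Fin 1 → A)) :=
    { toFun := fun h => (⟨a * h 0 + b * h 1, by
          rw [Submodule.mem_span_pair]
          exact ⟨MulOpposite.op (h 0), MulOpposite.op (h 1), by simp⟩⟩,
          fun _ => w1 * h 0 + w2 * h 1)
      map_add' := by
        intro x y
        ext <;> simp [mul_add] <;> abel
      map_smul' := by
        intro c x
        ext <;> simp [add_mul, mul_assoc] }
  refine ⟨(LinearEquiv.ofBijective F ⟨?_, ?_⟩).symm⟩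
  · rw [injective_iff_map_eq_zero]
    intro h h0
    have h1 : a * h 0 + b * h 1 = 0 := congrArg (fun z => (z.1 : A)) h0
    have h2 : w1 * h 0 + w2 * h 1 = 0 := congrArg (fun z => z.2 0) h0
    obtain ⟨e1, e2⟩ := hker _ _ h1
    rw [h2, mul_zero] at e1 e2
    ext i
    fin_cases i
    · exact e1
    · exact e2
  · rintro ⟨⟨y, hy⟩, c⟩
    obtain ⟨f, g, rfl⟩ := Submodule.mem_span_pair.1 hy
    obtain ⟨f, rfl⟩ := MulOpposite.op_surjective f
    obtain ⟨g, rfl⟩ := MulOpposite.op_surjective g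
    set z := c 0 - (w1 * f + w2 * g) with hz
    refine ⟨![f + v1 * z, g + v2 * z], ?_⟩
    have e1 : a * (f + v1 * z) + b * (g + v2 * z) = a * f + b * g := by
      have : a * (f + v1 * z) + b * (g + v2 * z) = a * f + b * g + (a * v1 + b * v2) * z := by
        noncomm_ring
      rw [this, hv]; simp
    have e2 : w1 * (f + v1 * z) + w2 * (g + v2 * z) = c 0 := by
      have : w1 * (f + v1 * z) + w2 * (g + v2 * z) =
        w1 * f + w2 * g + (w1 * v1 + w2 * v2) * z := by noncomm_ring
      rw [this, hw, hz]; simp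
    refine Prod.ext (Subtype.ext ?_) (funext fun i => ?_)
    · simpa [F] using e1
    · have : i = 0 := Subsingleton.elim _ _
      subst this
      simpa [F] using e2

theorem du_ibn {A k : Type} [Ring A] [Field k] (ε : A →+* k) : InvariantBasisNumber A := by
  rw [invariantBasisNumber_iff_matrix]
  intro n m f g h1 h2
  have h1' := congrArg (fun M => M.map ε) h1
  have h2' := congrArg (fun M => M.map ε) h2
  simp only [Matrix.map_mul] at h1' h2'
  refine invariantBasisNumber_iff_matrix.1 inferInstance n m (f.map ε) (g.map ε) ?_ ?_
  · rw [h1']; simp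
  · rw [h2']; simp

def duOpEquiv (A : Type) [Ring A] : Aᵐᵒᵖ ≃ₗ[Aᵐᵒᵖ] A :=
  { toFun := MulOpposite.unop
    invFun := MulOpposite.op
    map_add' := by intros; rfl
    map_smul' := by intros; rfl
    left_inv := by intro _; rfl
    right_inv := by intro _; rfl }

def duPiBasis (A : Type) [Ring A] (n : ℕ) : Module.Basis (Fin n) Aᵐᵒᵖ (Fin n → A) :=
  (Pi.basisFun Aᵐᵒᵖ (Fin n)).map (LinearEquiv.piCongrRight fun _ => duOpEquiv A)

theorem du_cyclic {A k : Type} [Ring A] [Field k] (ε : A →+* k) (P : Submodule Aᵐᵒᵖ A)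
    (e : (P × (Fin 1 → A)) ≃ₗ[Aᵐᵒᵖ] (Fin 2 → A)) (hfree : Module.Free Aᵐᵒᵖ P) :
    ∃ p ∈ P, ∀ y ∈ P, ∃ q, y = p * q := by
  have := du_ibn ε
  obtain ⟨⟨ι, bas⟩⟩ := hfree
  have B1 := (bas.prod (duPiBasis A 1)).map e
  have E := B1.indexEquiv (duPiBasis A 2)
  have : Finite (ι ⊕ Fin 1) := Finite.of_equiv _ E.symm
  have : Finite ι := Finite.of_injective (Sum.inl : ι → ι ⊕ Fin 1) Sum.inl_injective
  have hc := Nat.card_congr E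
  rw [Nat.card_sum] at hc
  simp at hc
  obtain ⟨hi, ⟨i⟩⟩ := Nat.card_eq_one_iff_unique.1 hc
  refine ⟨(bas i : A), (bas i).2, fun y hy => ?_⟩
  letI : Unique ι := { default := i, uniq := fun j => Subsingleton.elim _ _ }
  have := bas.sum_repr ⟨y, hy⟩
  rw [Fintype.sum_unique] at this
  refine ⟨MulOpposite.unop (bas.repr ⟨y, hy⟩ i), ?_⟩
  have h2 := congrArg Subtype.val this
  exact h2.symm

/-! ### Skew Laurent polynomials -/

section skew
open SkewMonoidAlgebra

variable {R : Type} [CommRing R] [IsDomain R] [MulSemiringAction (Multiplicative ℤ) R]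

theorem du_coeff_unique (p q : SkewMonoidAlgebra R (Multiplicative ℤ)) {x y : (Multiplicative ℤ)}
    (hx : x ∈ p.support) (hy : y ∈ q.support)
    (h : UniqueMul p.support q.support x y) : (p * q).coeff (x * y) ≠ 0 := by
  classical
  have : (p * q).coeff (x * y) = p.coeff x * x • q.coeff y := by
    rw [SkewMonoidAlgebra.coeff_mul, SkewMonoidAlgebra.sum_def, Finsupp.sum, Finset.sum_eq_single x,
      SkewMonoidAlgebra.sum_def, Finsupp.sum, Finset.sum_eq_single y]
    · simp
    · intro b hb hne
      rw [if_neg]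
      intro hh
      exact hne (mul_left_cancel hh)
    · intro hn; exact absurd hy hn
    · intro b hb hne
      rw [SkewMonoidAlgebra.sum_def, Finsupp.sum]
      refine Finset.sum_eq_zero fun c hc => ?_
      rw [if_neg]
      intro hh
      exact hne (h hb hc hh).1
    · intro hn; exact absurd hx hn
  rw [this]
  refine mul_ne_zero (mem_support_iff.1 hx) ?_
  rw [Ne, smul_eq_zero_iff_eq]
  exact mem_support_iff.1 hy

theorem du_homog (p q : SkewMonoidAlgebra R (Multiplicative ℤ)) {c : R} (hc : c ≠ 0)
    (h : p * q = single 1 c) : ∃ d ρ, p = single d ρ := by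
  classical
  have hp : p ≠ 0 := by
    rintro rfl
    rw [zero_mul] at h
    exact hc (single_eq_zero.1 h.symm)
  have hq : q ≠ 0 := by
    rintro rfl
    rw [mul_zero] at h
    exact hc (single_eq_zero.1 h.symm)
  have hps : 0 < p.support.card := by
    rw [Finset.card_pos, Finset.nonempty_iff_ne_empty, Ne, support_eq_empty]; exact hp
  have hqs : 0 < q.support.card := by
    rw [Finset.card_pos, Finset.nonempty_iff_ne_empty, Ne, support_eq_empty]; exact hq
  have key : ∀ z : (Multiplicative ℤ) × (Multiplicative ℤ), z ∈ p.support ×ˢ q.support →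
      UniqueMul p.support q.support z.1 z.2 → z.1 * z.2 = 1 := by
    intro z hz hu
    rw [Finset.mem_product] at hz
    have := du_coeff_unique p q hz.1 hz.2 hu
    rw [h, coeff_single] at this
    by_contra hne
    exact this (Finsupp.single_eq_of_ne hne)
  by_cases h1 : 1 < p.support.card * q.support.card
  · obtain ⟨z1, hz1, z2, hz2, hne, hu1, hu2⟩ := TwoUniqueProds.uniqueMul_of_one_lt_card h1
    have e1 := key z1 hz1 hu1
    have e2 := key z2 hz2 hu2
    rw [Finset.mem_product] at hz2
    have := hu1 hz2.1 hz2.2 (e2.trans e1.symm)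
    exact absurd (Prod.ext this.1.symm this.2.symm) hne
  · have hp1 : p.support.card = 1 := by nlinarith
    obtain ⟨d, hd⟩ := Finset.card_eq_one.1 hp1
    refine ⟨d, p.coeff d, ?_⟩
    apply SkewMonoidAlgebra.ext
    intro x
    rw [coeff_single]
    by_cases hx : x = d
    · subst hx; simp
    · rw [Finsupp.single_eq_of_ne hx]
      by_contra hn
      have : x ∈ p.support := mem_support_iff.2 hn
      rw [hd, Finset.mem_singleton] at this
      exact hx this

theorem du_not_unimodular (r s c : R) (hr : r ≠ 0) (hs : s ≠ 0) (hns : ¬ IsUnit s)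
    (hc : IsUnit c) (hact : (Multiplicative.ofAdd (1 : ℤ)) • s = c * r)
    (f g : SkewMonoidAlgebra R (Multiplicative ℤ))
    (h : (single 1 r + single (Multiplicative.ofAdd 1) s) * f + single 1 (r * s) * g = 1) :
    False := by
  set u : (Multiplicative ℤ) := Multiplicative.ofAdd 1 with hu
  have hco : ∀ n : ℤ, r * f.coeff (Multiplicative.ofAdd n) +
      s * (u • f.coeff (Multiplicative.ofAdd (n - 1))) +
      r * s * g.coeff (Multiplicative.ofAdd n) = if n = 0 then 1 else 0 := by
    intro n
    have := congrArg (fun z => z.coeff (Multiplicative.ofAdd n)) h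
    simp only [add_mul, coeff_add, Finsupp.add_apply, coeff_single_mul, coeff_one,
      Finsupp.single_apply] at this
    have e1 : u⁻¹ * Multiplicative.ofAdd n = Multiplicative.ofAdd (n - 1) := by
      rw [hu, ← ofAdd_neg, ← ofAdd_add]; congr 1; ring
    have e2 : ((1 : (Multiplicative ℤ)) = Multiplicative.ofAdd n) ↔ n = 0 := by
      rw [eq_comm, ofAdd_eq_one]
    simpa [e1, e2] using this
  have hup : ∀ x : R, s ∣ x → r ∣ u • x := by
    rintro x ⟨y, rfl⟩
    rw [smul_mul', hact]
    exact ⟨c * u • y, by ring⟩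
  have hdown : ∀ x : R, r ∣ u • x → s ∣ x := by
    rintro x ⟨y, hy⟩
    obtain ⟨c, rfl⟩ := hc
    have : u • x = u • (s * u⁻¹ • ((↑c⁻¹ : R) * y)) := by
      rw [smul_mul', hact, smul_inv_smul, hy]
      linear_combination (-(r * y)) * c.mul_inv
    exact ⟨_, MulAction.injective u this⟩
  -- support bounds
  obtain ⟨N, hN⟩ : ∃ N : ℕ, ∀ n : ℤ, (N : ℤ) ≤ |n| → f.coeff (Multiplicative.ofAdd n) = 0 := by
    refine ⟨∑ x ∈ f.support, (Multiplicative.toAdd x).natAbs + 1, fun n hn => ?_⟩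
    by_contra hne
    have hm : Multiplicative.ofAdd n ∈ f.support := mem_support_iff.2 hne
    have := Finset.single_le_sum (f := fun x : (Multiplicative ℤ) => (Multiplicative.toAdd x).natAbs)
      (fun i _ => Nat.zero_le _) hm
    simp only [toAdd_ofAdd] at this
    have h3 : (n.natAbs : ℤ) = |n| := Int.natCast_natAbs n
    omega
  have hlow : ∀ k : ℕ, (k : ℤ) - N < 0 → s ∣ f.coeff (Multiplicative.ofAdd ((k : ℤ) - N)) := by
    intro k
    induction k with
    | zero =>
      intro _
      rw [hN _ (by simp)]
      exact dvd_zero _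
    | succ k ih =>
      intro hk
      have h1 := hup _ (ih (by push_cast at hk; omega))
      have h2 := hco (((k + 1 : ℕ) : ℤ) - N)
      rw [if_neg hk.ne, show (((k + 1 : ℕ) : ℤ) - N - 1) = (k : ℤ) - N by push_cast; ring] at h2
      obtain ⟨y, hy⟩ := h1
      rw [hy] at h2
      refine ⟨- y - g.coeff (Multiplicative.ofAdd (((k + 1 : ℕ) : ℤ) - N)), ?_⟩
      apply mul_left_cancel₀ hr
      linear_combination h2
  have hhigh : ∀ k : ℕ, 0 ≤ (N : ℤ) - k → s ∣ f.coeff (Multiplicative.ofAdd ((N : ℤ) - k)) := by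
    intro k
    induction k with
    | zero =>
      intro _
      rw [hN _ (by simp)]
      exact dvd_zero _
    | succ k ih =>
      intro hk
      have h1 := ih (by push_cast at hk; omega)
      have h2 := hco ((N : ℤ) - k)
      rw [if_neg (by push_cast at hk; omega),
        show ((N : ℤ) - k - 1) = (N : ℤ) - (k + 1 : ℕ) by push_cast; ring] at h2
      obtain ⟨y, hy⟩ := h1
      rw [hy] at h2
      apply hdown
      refine ⟨- y - g.coeff (Multiplicative.ofAdd ((N : ℤ) - k)), ?_⟩
      apply mul_left_cancel₀ hs
      linear_combination h2
  have h0 := hhigh N (by simp)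
  rw [sub_self] at h0
  have h1 := hco 0
  rw [if_pos rfl] at h1
  obtain ⟨y, hy⟩ := h0
  rw [hy] at h1
  apply hns
  exact IsUnit.of_mul_eq_one _ (show s * (r * y + u • f.coeff (Multiplicative.ofAdd (0 - 1)) +
    r * g.coeff (Multiplicative.ofAdd 0)) = 1 by linear_combination h1)

theorem du_not_cyclic (r s c : R) (hr : r ≠ 0) (hs : s ≠ 0) (hns : ¬ IsUnit s)
    (hc : IsUnit c) (hact : (Multiplicative.ofAdd (1 : ℤ)) • s = c * r) (hsr : IsUnit (s - r))
    (p q1 q2 f g : SkewMonoidAlgebra R (Multiplicative ℤ))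
    (h1 : single 1 r + single (Multiplicative.ofAdd 1) s = p * q1)
    (h2 : single 1 (r * s) = p * q2)
    (h : p = (single 1 r + single (Multiplicative.ofAdd 1) s) * f + single 1 (r * s) * g) :
    False := by
  obtain ⟨d, ρ, rfl⟩ := du_homog p q2 (mul_ne_zero hr hs) h2.symm
  have hρr : ρ ∣ r := by
    have := congrArg (fun z => z.coeff 1) h1
    simp only [coeff_add, Finsupp.add_apply, coeff_single_mul, coeff_single] at this
    rw [Finsupp.single_eq_same, Finsupp.single_eq_of_ne (by decide), add_zero] at this
    exact ⟨_, this⟩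
  have hρs : ρ ∣ s := by
    have := congrArg (fun z => z.coeff (Multiplicative.ofAdd 1)) h1
    simp only [coeff_add, Finsupp.add_apply, coeff_single_mul, coeff_single] at this
    rw [Finsupp.single_eq_same, Finsupp.single_eq_of_ne (by decide), zero_add] at this
    exact ⟨_, this⟩
  have hρ : IsUnit ρ := isUnit_of_dvd_unit (dvd_sub hρs hρr) hsr
  obtain ⟨ρ, rfl⟩ := hρ
  have hinv : single d (ρ : R) * single d⁻¹ (d⁻¹ • (↑ρ⁻¹ : R)) = 1 := by
    rw [single_mul_single, smul_inv_smul]; simp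
  refine du_not_unimodular r s c hr hs hns hc hact (f * single d⁻¹ (d⁻¹ • (↑ρ⁻¹ : R)))
    (g * single d⁻¹ (d⁻¹ • (↑ρ⁻¹ : R))) ?_
  rw [← mul_assoc, ← mul_assoc, ← add_mul, ← h, hinv]

end skew

/-! ### The concrete base ring `K[ω, x]` with its automorphism -/

def DUBase (K : Type) [Field K] (_lam _mu : Kˣ) : Type := MvPolynomial (Fin 2) K

namespace DUBase
variable {K : Type} [Field K] (lam mu : Kˣ)

instance : CommRing (DUBase K lam mu) := inferInstanceAs (CommRing (MvPolynomial (Fin 2) K))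
instance : IsDomain (DUBase K lam mu) := inferInstanceAs (IsDomain (MvPolynomial (Fin 2) K))
instance : Algebra K (DUBase K lam mu) := inferInstanceAs (Algebra K (MvPolynomial (Fin 2) K))

/-- the variable `ω` -/
def om : DUBase K lam mu := MvPolynomial.X (R := K) (0 : Fin 2)
/-- the variable `x` -/
def xx : DUBase K lam mu := MvPolynomial.X (R := K) (1 : Fin 2)

/-- evaluation in a commutative algebra -/
def ev {S : Type} [CommRing S] [Algebra K S] (a b : S) : DUBase K lam mu →ₐ[K] S :=
  (MvPolynomial.aeval ![a, b] : MvPolynomial (Fin 2) K →ₐ[K] S)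

@[simp] theorem ev_om {S : Type} [CommRing S] [Algebra K S] (a b : S) :
    ev lam mu a b (om lam mu) = a :=
  (MvPolynomial.aeval_X (R := K) ![a, b] (0 : Fin 2)).trans rfl

@[simp] theorem ev_xx {S : Type} [CommRing S] [Algebra K S] (a b : S) :
    ev lam mu a b (xx lam mu) = b :=
  (MvPolynomial.aeval_X (R := K) ![a, b] (1 : Fin 2)).trans rfl

theorem alg_induction {P : DUBase K lam mu → Prop} (p : DUBase K lam mu)
    (hC : ∀ c : K, P (algebraMap K _ c)) (hadd : ∀ p q, P p → P q → P (p + q))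
    (hom : ∀ p, P p → P (p * om lam mu)) (hxx : ∀ p, P p → P (p * xx lam mu)) : P p := by
  refine MvPolynomial.induction_on (motive := P) p hC hadd ?_
  intro p i hp
  fin_cases i
  · exact hom p hp
  · exact hxx p hp

theorem hom_ext {S : Type} [Ring S] [Algebra K S] {f g : DUBase K lam mu →ₐ[K] S}
    (h0 : f (om lam mu) = g (om lam mu)) (h1 : f (xx lam mu) = g (xx lam mu)) : f = g := by
  ext p
  induction p using alg_induction with
  | hC c => simp
  | hadd p q hp hq => simp [hp, hq]
  | hom p hp => simp [hp, h0]
  | hxx p hp => simp [hp, h1]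

/-- `φ(ω) = μω + 1`, `φ(x) = ω + λ x`. -/
def phi : DUBase K lam mu →ₐ[K] DUBase K lam mu :=
  ev lam mu ((mu : K) • om lam mu + 1) (om lam mu + (lam : K) • xx lam mu)

/-- the inverse of `φ` -/
def theta : DUBase K lam mu →ₐ[K] DUBase K lam mu :=
  ev lam mu ((mu : K)⁻¹ • (om lam mu - 1))
    ((lam : K)⁻¹ • (xx lam mu - (mu : K)⁻¹ • (om lam mu - 1)))

theorem phi_om : phi lam mu (om lam mu) = (mu : K) • om lam mu + 1 := by simp [phi]
theorem phi_xx : phi lam mu (xx lam mu) = om lam mu + (lam : K) • xx lam mu := by simp [phi]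
theorem theta_om : theta lam mu (om lam mu) = (mu : K)⁻¹ • (om lam mu - 1) := by simp [theta]
theorem theta_xx : theta lam mu (xx lam mu) =
    (lam : K)⁻¹ • (xx lam mu - (mu : K)⁻¹ • (om lam mu - 1)) := by simp [theta]

/-- `θ` as an automorphism. -/
def thetaE : DUBase K lam mu ≃ₐ[K] DUBase K lam mu :=
  AlgEquiv.ofAlgHom (theta lam mu) (phi lam mu)
    (by
      apply hom_ext
      · simp [phi_om, theta_om]
      · simp [phi_xx, theta_om, theta_xx])
    (by
      apply hom_ext
      · simp [phi_om, theta_om]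
      · simp [phi_om, phi_xx, theta_xx])

instance : MulSemiringAction (Multiplicative ℤ) (DUBase K lam mu) :=
  MulSemiringAction.compHom (DUBase K lam mu)
    (zpowersHom (DUBase K lam mu ≃ₐ[K] DUBase K lam mu) (thetaE lam mu))

theorem smul_def' (g : Multiplicative ℤ) (p : DUBase K lam mu) :
    g • p = (thetaE lam mu ^ (Multiplicative.toAdd g)) p := rfl

theorem u_smul (p : DUBase K lam mu) :
    Multiplicative.ofAdd (1 : ℤ) • p = theta lam mu p := by
  rw [smul_def', toAdd_ofAdd, zpow_one]; rfl

theorem uinv_smul (p : DUBase K lam mu) :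
    (Multiplicative.ofAdd (1 : ℤ))⁻¹ • p = phi lam mu p := by
  rw [smul_def', toAdd_inv, toAdd_ofAdd, zpow_neg, zpow_one]; rfl

instance : SMulCommClass (Multiplicative ℤ) K (DUBase K lam mu) where
  smul_comm g c p := by
    rw [smul_def', smul_def', map_smul]

theorem theta_phi (p : DUBase K lam mu) : theta lam mu (phi lam mu p) = p := by
  rw [← u_smul, ← uinv_smul, smul_inv_smul]

theorem phi_theta (p : DUBase K lam mu) : phi lam mu (theta lam mu p) = p := by
  rw [← u_smul, ← uinv_smul, inv_smul_smul]

end DUBase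

/-! ### Commutation rules in a ring with the down-up relations -/

section comm
variable {K A : Type} [Field K] [Ring A] [Algebra K A] (lam mu : Kˣ) (D U : A)

structure DUPair : Prop where
  r1 : D * U * U = ((lam : K) + mu) • (U * D * U) + (-((lam : K) * mu)) • (U * U * D) + U
  r2 : D * D * U = ((lam : K) + mu) • (D * U * D) + (-((lam : K) * mu)) • (U * D * D) + D

/-- `ω = DU − λUD` -/
def duOm : A := D * U - (lam : K) • (U * D)

variable {lam mu D U}

theorem DUPair.om_U (h : DUPair lam mu D U) :
    duOm lam D U * U = U * ((mu : K) • duOm lam D U + 1) := by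
  have := h.r1
  simp only [duOm, sub_mul, mul_add, mul_sub, mul_smul_comm, smul_mul_assoc, mul_one, smul_sub,
    smul_smul, ← mul_assoc]
  rw [this, add_smul, neg_smul, mul_comm (lam : K)]
  abel

theorem DUPair.D_om (h : DUPair lam mu D U) :
    D * duOm lam D U = ((mu : K) • duOm lam D U + 1) * D := by
  have := h.r2
  simp only [duOm, sub_mul, add_mul, mul_sub, mul_smul_comm, smul_mul_assoc, one_mul, smul_sub,
    smul_smul, ← mul_assoc]
  rw [this, add_smul, neg_smul, mul_comm (lam : K)]
  abel

theorem DUPair.comm (h : DUPair lam mu D U) : duOm lam D U * (U * D) = (U * D) * duOm lam D U := by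
  rw [← mul_assoc, h.om_U, mul_assoc U D, h.D_om, mul_assoc]

theorem DUPair.comm' (h : DUPair lam mu D U) :
    ∀ a ∈ ({duOm lam D U, U * D} : Set A), ∀ b ∈ ({duOm lam D U, U * D} : Set A),
      a * b = b * a := by
  rintro a (rfl | rfl) b (rfl | rfl)
  · rfl
  · exact h.comm
  · exact h.comm.symm
  · rfl

open DUBase in
theorem DUPair.exists_ev (h : DUPair lam mu D U) : ∃ e : DUBase K lam mu →ₐ[K] A,
    e (om lam mu) = duOm lam D U ∧ e (xx lam mu) = U * D := by
  letI := Algebra.adjoinCommRingOfComm K h.comm'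
  refine ⟨(Algebra.adjoin K ({duOm lam D U, U * D} : Set A)).val.comp
    (ev lam mu ⟨duOm lam D U, Algebra.subset_adjoin (by simp)⟩
      ⟨U * D, Algebra.subset_adjoin (by simp)⟩), ?_, ?_⟩
  · simp
  · simp

open DUBase in
theorem DUPair.ev_U (h : DUPair lam mu D U) (e : DUBase K lam mu →ₐ[K] A)
    (h0 : e (om lam mu) = duOm lam D U) (h1 : e (xx lam mu) = U * D) (p : DUBase K lam mu) :
    e p * U = U * e (phi lam mu p) := by
  induction p using alg_induction with
  | hC c => simp [Algebra.commutes]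
  | hadd p q hp hq => simp [add_mul, mul_add, hp, hq]
  | hom p hp =>
    rw [map_mul, map_mul, map_mul, ← mul_assoc, ← hp, mul_assoc, mul_assoc, h0, h.om_U, phi_om]
    simp [h0]
  | hxx p hp =>
    rw [map_mul, map_mul, map_mul, ← mul_assoc, ← hp, mul_assoc, mul_assoc, h1, phi_xx]
    simp [h0, h1, duOm, mul_assoc]

open DUBase in
theorem DUPair.D_ev (h : DUPair lam mu D U) (e : DUBase K lam mu →ₐ[K] A)
    (h0 : e (om lam mu) = duOm lam D U) (h1 : e (xx lam mu) = U * D) (p : DUBase K lam mu) :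
    D * e p = e (phi lam mu p) * D := by
  induction p using alg_induction with
  | hC c => simp [Algebra.commutes]
  | hadd p q hp hq => simp [add_mul, mul_add, hp, hq]
  | hom p hp =>
    rw [map_mul, map_mul, map_mul, ← mul_assoc, hp, mul_assoc, mul_assoc, h0, h.D_om, phi_om]
    simp [h0]
  | hxx p hp =>
    rw [map_mul, map_mul, map_mul, ← mul_assoc, hp, mul_assoc, mul_assoc, h1, phi_xx]
    simp [h0, h1, duOm, ← mul_assoc]

end comm

/-! ### The embedding into skew Laurent polynomials -/

section embed
open DUBase SkewMonoidAlgebra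
variable {K : Type} [Field K] (lam mu : Kˣ)

abbrev DUA : Type := DownUp K ((lam : K) + mu) (-((lam : K) * mu)) 1
abbrev DUA.D : DUA lam mu := DownUp.D K ((lam : K) + mu) (-((lam : K) * mu)) 1
abbrev DUA.U : DUA lam mu := DownUp.U K ((lam : K) + mu) (-((lam : K) * mu)) 1
abbrev DUB : Type := SkewMonoidAlgebra (DUBase K lam mu) (Multiplicative ℤ)

theorem DUA.pair : DUPair lam mu (DUA.D lam mu) (DUA.U lam mu) := by
  constructor
  · have := RingQuot.mkAlgHom_rel K (DownUpRel.rel1 (K := K) (a := (lam : K) + mu)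
      (b := -((lam : K) * mu)) (g := 1))
    simpa [DUA.D, DUA.U, DownUp.D, DownUp.U, -neg_smul] using this
  · have := RingQuot.mkAlgHom_rel K (DownUpRel.rel2 (K := K) (a := (lam : K) + mu)
      (b := -((lam : K) * mu)) (g := 1))
    simpa [DUA.D, DUA.U, DownUp.D, DownUp.U, -neg_smul] using this

def DUA.lift {S : Type} [Ring S] [Algebra K S] {d u : S} (h : DUPair lam mu d u) :
    DUA lam mu →ₐ[K] S :=
  RingQuot.liftAlgHom K ⟨FreeAlgebra.lift K ![d, u], by
    rintro _ _ (_ | _)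
    · simpa using h.r1
    · simpa using h.r2⟩

theorem DUA.lift_D {S : Type} [Ring S] [Algebra K S] {d u : S} (h : DUPair lam mu d u) :
    DUA.lift lam mu h (DUA.D lam mu) = d := by
  simp [DUA.lift, DUA.D, DownUp.D]

theorem DUA.lift_U {S : Type} [Ring S] [Algebra K S] {d u : S} (h : DUPair lam mu d u) :
    DUA.lift lam mu h (DUA.U lam mu) = u := by
  simp [DUA.lift, DUA.U, DownUp.U]

theorem DUA.gen_induction {P : DUA lam mu → Prop} (z : DUA lam mu)
    (hC : ∀ c : K, P (algebraMap K _ c)) (hadd : ∀ p q, P p → P q → P (p + q))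
    (hmul : ∀ p q, P p → P q → P (p * q))
    (hD : P (DUA.D lam mu)) (hU : P (DUA.U lam mu)) : P z := by
  obtain ⟨w, rfl⟩ := RingQuot.mkAlgHom_surjective K _ z
  induction w using FreeAlgebra.induction with
  | grade0 c => simpa using hC c
  | grade1 i =>
    fin_cases i
    · exact hD
    · exact hU
  | mul a b ha hb => rw [map_mul]; exact hmul _ _ ha hb
  | add a b ha hb => rw [map_add]; exact hadd _ _ ha hb

/-- `D` in the skew Laurent ring -/
def DUB.D : DUB lam mu := single (Multiplicative.ofAdd (1 : ℤ))⁻¹ (phi lam mu (xx lam mu))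
/-- `U` in the skew Laurent ring -/
def DUB.U : DUB lam mu := single (Multiplicative.ofAdd (1 : ℤ)) 1

theorem DUB.UD : DUB.U lam mu * DUB.D lam mu = single 1 (xx lam mu) := by
  rw [DUB.U, DUB.D, single_mul_single, u_smul, theta_phi, mul_inv_cancel, one_mul]

theorem DUB.DU : DUB.D lam mu * DUB.U lam mu = single 1 (phi lam mu (xx lam mu)) := by
  rw [DUB.U, DUB.D, single_mul_single, smul_one, inv_mul_cancel, mul_one]

theorem DUB.om_eq : duOm lam (DUB.D lam mu) (DUB.U lam mu) = single 1 (om lam mu) := by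
  rw [duOm, DUB.UD, DUB.DU, phi_xx, smul_single, single_add]
  simp

theorem DUB.pair : DUPair lam mu (DUB.D lam mu) (DUB.U lam mu) := by
  constructor
  · rw [mul_assoc (DUB.U lam mu) (DUB.U lam mu), DUB.UD, DUB.DU, DUB.U, single_mul_single,
      single_mul_single, single_mul_single, smul_single, smul_single, one_mul (Multiplicative.ofAdd (1 : ℤ)),
      mul_one (Multiplicative.ofAdd (1 : ℤ)), ← single_add, ← single_add, one_smul, mul_one,
      mul_one, one_mul]
    congr 1
    rw [u_smul, theta_xx, phi_xx]
    simp only [Algebra.smul_def, map_add, map_mul, map_neg, mul_one]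
    have h1 : algebraMap K (DUBase K lam mu) lam * algebraMap K (DUBase K lam mu) (lam : K)⁻¹ = 1 := by
      rw [← map_mul]; simp
    have h2 : algebraMap K (DUBase K lam mu) mu * algebraMap K (DUBase K lam mu) (mu : K)⁻¹ = 1 := by
      rw [← map_mul]; simp
    generalize algebraMap K (DUBase K lam mu) (lam : K)⁻¹ = li at *
    generalize algebraMap K (DUBase K lam mu) (mu : K)⁻¹ = mi at *
    generalize algebraMap K (DUBase K lam mu) (lam : K) = l at *
    generalize algebraMap K (DUBase K lam mu) (mu : K) = m at *
    linear_combination (m * (xx lam mu - mi * (om lam mu - 1))) * h1 - (om lam mu - 1) * h2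
  · rw [mul_assoc (DUB.D lam mu) (DUB.D lam mu), DUB.UD, DUB.DU, DUB.D, single_mul_single,
      single_mul_single, single_mul_single, smul_single, smul_single, ← single_add,
      one_mul, mul_one, ← single_add, one_smul, uinv_smul]
    congr 1
    rw [phi_xx, map_add, phi_om, map_smul, phi_xx]
    simp only [Algebra.smul_def, map_add, map_mul, map_neg, mul_one]
    ring

/-- the embedding -/
def duPsi : DUA lam mu →ₐ[K] DUB lam mu := DUA.lift lam mu (DUB.pair lam mu)

theorem duPsi_D : duPsi lam mu (DUA.D lam mu) = DUB.D lam mu := DUA.lift_D _ _ _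
theorem duPsi_U : duPsi lam mu (DUA.U lam mu) = DUB.U lam mu := DUA.lift_U _ _ _

theorem duPsi_om : duPsi lam mu (duOm lam (DUA.D lam mu) (DUA.U lam mu)) =
    single 1 (om lam mu) := by
  rw [← DUB.om_eq, duOm, duOm, map_sub, map_smul, map_mul, map_mul, duPsi_D, duPsi_U]

def duE : ℤ → DUA lam mu
  | Int.ofNat n => DUA.U lam mu ^ n
  | Int.negSucc n => DUA.D lam mu ^ (n + 1)

theorem duPsi_ev (e : DUBase K lam mu →ₐ[K] DUA lam mu)
    (h0 : e (om lam mu) = duOm lam (DUA.D lam mu) (DUA.U lam mu))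
    (h1 : e (xx lam mu) = DUA.U lam mu * DUA.D lam mu) (p : DUBase K lam mu) :
    duPsi lam mu (e p) = single 1 p := by
  induction p using alg_induction with
  | hC c => rw [AlgHom.commutes, AlgHom.commutes, coe_algebraMap]; rfl
  | hadd p q hp hq => rw [map_add, map_add, hp, hq, single_add]
  | hom p hp => rw [map_mul, map_mul, hp, h0, duPsi_om, single_mul_single]; simp
  | hxx p hp =>
    rw [map_mul, map_mul, hp, h1, map_mul, duPsi_D, duPsi_U, DUB.UD, single_mul_single]; simp

theorem phi_ne_zero {p : DUBase K lam mu} (h : p ≠ 0) : phi lam mu p ≠ 0 := by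
  rw [← uinv_smul, Ne, smul_eq_zero_iff_eq]
  exact h

theorem xx_ne_zero : xx lam mu ≠ 0 := MvPolynomial.X_ne_zero (R := K) (1 : Fin 2)

theorem duPsi_E (n : ℤ) : ∃ c : DUBase K lam mu, c ≠ 0 ∧
    duPsi lam mu (duE lam mu n) = single (Multiplicative.ofAdd n) c := by
  have hU : ∀ k : ℕ, DUB.U lam mu ^ k = single (Multiplicative.ofAdd (k : ℤ)) 1 := by
    intro k
    induction k with
    | zero => rw [pow_zero]; rfl
    | succ k ih =>
      rw [pow_succ, ih, DUB.U, single_mul_single, smul_one, mul_one, ← ofAdd_add]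
      push_cast
      rfl
  have hD : ∀ k : ℕ, ∃ c : DUBase K lam mu, c ≠ 0 ∧
      DUB.D lam mu ^ k = single (Multiplicative.ofAdd (-(k : ℤ))) c := by
    intro k
    induction k with
    | zero => exact ⟨1, one_ne_zero, by rw [pow_zero]; rfl⟩
    | succ k ih =>
      obtain ⟨c, hc, ih⟩ := ih
      refine ⟨c * (Multiplicative.ofAdd (-(k : ℤ))) • phi lam mu (xx lam mu), ?_, ?_⟩
      · refine mul_ne_zero hc ?_
        rw [Ne, smul_eq_zero_iff_eq]
        exact phi_ne_zero _ _ (xx_ne_zero _ _)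
      · rw [pow_succ, ih, DUB.D, single_mul_single, ← ofAdd_neg, ← ofAdd_add]
        push_cast
        rw [neg_add]
  cases n with
  | ofNat k => exact ⟨1, one_ne_zero, by rw [duE, map_pow, duPsi_U, hU]; rfl⟩
  | negSucc k =>
    obtain ⟨c, hc, h⟩ := hD (k + 1)
    refine ⟨c, hc, ?_⟩
    rw [duE, map_pow, duPsi_D, h]; rfl

theorem duPsi_injective : Function.Injective (duPsi lam mu) := by
  obtain ⟨e, h0, h1⟩ := (DUA.pair lam mu).exists_ev
  have hU := (DUA.pair lam mu).ev_U e h0 h1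
  have hD := (DUA.pair lam mu).D_ev e h0 h1
  set D := DUA.D lam mu with hDdef
  set U := DUA.U lam mu with hUdef
  have hUk : ∀ (k : ℕ) p, ∃ p', e p * U ^ k = U ^ k * e p' := by
    intro k
    induction k with
    | zero => intro p; exact ⟨p, by simp⟩
    | succ k ih =>
      intro p
      obtain ⟨p', hp'⟩ := ih (phi lam mu p)
      exact ⟨p', by rw [pow_succ', ← mul_assoc, hU, mul_assoc, hp', mul_assoc]⟩
  have hDk : ∀ (k : ℕ) p, ∃ p', e p * D ^ k = D ^ k * e p' := by
    intro k
    induction k with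
    | zero => intro p; exact ⟨p, by simp⟩
    | succ k ih =>
      intro p
      obtain ⟨p', hp'⟩ := ih (theta lam mu p)
      refine ⟨p', ?_⟩
      have := hD (theta lam mu p)
      rw [phi_theta] at this
      rw [pow_succ', ← mul_assoc, ← this, mul_assoc, hp', mul_assoc]
  have hDE : ∀ n, ∃ m p, D * duE lam mu n = duE lam mu m * e p := by
    intro n
    cases n with
    | ofNat k =>
      cases k with
      | zero => exact ⟨Int.negSucc 0, 1, by simp [duE, hDdef]⟩
      | succ k =>
        have hy : D * U = e (phi lam mu (xx lam mu)) := by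
          rw [phi_xx, map_add, map_smul, h0, h1, duOm]; abel
        obtain ⟨p', hp'⟩ := hUk k (phi lam mu (xx lam mu))
        refine ⟨Int.ofNat k, p', ?_⟩
        rw [duE, duE, ← hUdef, pow_succ', ← mul_assoc, hy, hp']
    | negSucc k =>
      exact ⟨Int.negSucc (k + 1), 1, by rw [duE, duE, ← hDdef, map_one, mul_one, ← pow_succ']⟩
  have hUE : ∀ n, ∃ m p, U * duE lam mu n = duE lam mu m * e p := by
    intro n
    cases n with
    | ofNat k =>
      exact ⟨Int.ofNat (k + 1), 1, by rw [duE, duE, ← hUdef, map_one, mul_one, ← pow_succ']⟩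
    | negSucc k =>
      obtain ⟨p', hp'⟩ := hDk k (xx lam mu)
      cases k with
      | zero =>
        refine ⟨0, xx lam mu, ?_⟩
        change U * D ^ 1 = U ^ 0 * e (xx lam mu)
        rw [h1, pow_one, pow_zero, one_mul]
      | succ k =>
        refine ⟨Int.negSucc k, p', ?_⟩
        rw [duE, duE, ← hDdef, pow_succ' D (k + 1), ← mul_assoc, ← h1, hp']
  let Φ : (ℤ →₀ DUBase K lam mu) →+ DUA lam mu :=
    Finsupp.liftAddHom fun n => (AddMonoidHom.mulLeft (duE lam mu n)).comp (e : _ →+ _)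
  have hΦ : ∀ n p, Φ (Finsupp.single n p) = duE lam mu n * e p := by
    intro n p
    simp [Φ]
  have hleft : ∀ z w, ∃ w', z * Φ w = Φ w' := by
    have aux : ∀ X : DUA lam mu, (∀ n, ∃ m p, X * duE lam mu n = duE lam mu m * e p) →
        ∀ w, ∃ w', X * Φ w = Φ w' := by
      intro X hX w
      induction w using Finsupp.induction_linear with
      | zero => exact ⟨0, by simp⟩
      | add f g hf hg =>
        obtain ⟨f', hf⟩ := hf
        obtain ⟨g', hg⟩ := hg
        exact ⟨f' + g', by rw [map_add, mul_add, hf, hg, map_add]⟩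
      | single n p =>
        obtain ⟨m, q, hq⟩ := hX n
        exact ⟨Finsupp.single m (q * p), by rw [hΦ, hΦ, ← mul_assoc, hq, map_mul, mul_assoc]⟩
    intro z
    induction z using DUA.gen_induction with
    | hC c =>
      apply aux
      intro n
      exact ⟨n, algebraMap K _ c, by rw [AlgHom.commutes, Algebra.commutes]⟩
    | hadd p q hp hq =>
      intro w
      obtain ⟨f', hf⟩ := hp w
      obtain ⟨g', hg⟩ := hq w
      exact ⟨f' + g', by rw [map_add, add_mul, hf, hg]⟩
    | hmul p q hp hq =>
      intro w
      obtain ⟨g', hg⟩ := hq w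
      obtain ⟨f', hf⟩ := hp g'
      exact ⟨f', by rw [mul_assoc, hg, hf]⟩
    | hD => exact aux _ hDE
    | hU => exact aux _ hUE
  rw [injective_iff_map_eq_zero]
  intro z hz
  obtain ⟨w, hw⟩ := hleft z (Finsupp.single 0 1)
  rw [hΦ, show duE lam mu 0 = 1 from pow_zero _, map_one, mul_one, mul_one] at hw
  subst hw
  choose c hc hcE using duPsi_E lam mu
  have hco : ∀ (w : ℤ →₀ DUBase K lam mu) (n : ℤ),
      (duPsi lam mu (Φ w)).coeff (Multiplicative.ofAdd n) =
        c n * (Multiplicative.ofAdd n) • w n := by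
    intro w n
    induction w using Finsupp.induction_linear with
    | zero => simp
    | add f g hf hg =>
      rw [map_add, map_add, coeff_add, Finsupp.add_apply, hf, hg, Finsupp.add_apply, smul_add,
        mul_add]
    | single m p =>
      rw [hΦ, map_mul, hcE, duPsi_ev lam mu e h0 h1, single_mul_single, mul_one, coeff_single]
      by_cases hmn : n = m
      · subst hmn
        rw [Finsupp.single_eq_same, Finsupp.single_eq_same]
      · rw [Finsupp.single_eq_of_ne hmn, Finsupp.single_eq_of_ne, smul_zero, mul_zero]
        intro hh
        exact hmn (Multiplicative.ofAdd.injective hh)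
  have : w = 0 := by
    ext n
    have := hco w n
    rw [hz, coeff_zero, Finsupp.zero_apply, eq_comm, mul_eq_zero, smul_eq_zero_iff_eq] at this
    exact this.resolve_left (hc n)
  rw [this, map_zero]

end embed

/-! ### The main computation -/

section main
open DUBase SkewMonoidAlgebra
variable {K : Type} [Field K] (lam mu : Kˣ)

/-- `s = ω + μ⁻¹` in the base ring -/
def duS : DUBase K lam mu := om lam mu + algebraMap K _ (mu : K)⁻¹

theorem om_ne_zero : om lam mu ≠ 0 := MvPolynomial.X_ne_zero (R := K) (0 : Fin 2)

theorem duS_not_unit : ¬ IsUnit (duS lam mu) := by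
  intro h
  have := h.map (ev lam mu (-(mu : K)⁻¹) (0 : K))
  simp [duS] at this

theorem duS_ne_zero : duS lam mu ≠ 0 := by
  intro h
  have := congrArg (ev lam mu (1 -(mu : K)⁻¹) (0 : K)) h
  simp [duS] at this

theorem duS_act : Multiplicative.ofAdd (1 : ℤ) • duS lam mu =
    algebraMap K _ (mu : K)⁻¹ * om lam mu := by
  rw [u_smul, duS, map_add, theta_om, AlgHom.commutes, Algebra.smul_def]
  ring

theorem du_algebraMap_isUnit : IsUnit (algebraMap K (DUBase K lam mu) (mu : K)⁻¹) :=
  (IsUnit.mk0 _ (inv_ne_zero mu.ne_zero)).map _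

theorem duPsi_s : duPsi lam mu (duOm lam (DUA.D lam mu) (DUA.U lam mu) + (mu : K)⁻¹ • 1) =
    single 1 (duS lam mu) := by
  rw [map_add, duPsi_om, map_smul, map_one, duS, single_add, Algebra.algebraMap_eq_smul_one, ← smul_single]
  rfl

theorem duPsi_b : duPsi lam mu (duOm lam (DUA.D lam mu) (DUA.U lam mu) *
      duOm lam (DUA.D lam mu) (DUA.U lam mu) +
      (mu : K)⁻¹ • duOm lam (DUA.D lam mu) (DUA.U lam mu)) =
    single 1 (om lam mu * duS lam mu) := by
  rw [map_add, map_mul, map_smul, duPsi_om, single_mul_single, smul_single, mul_one, one_smul,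
    ← single_add, duS, Algebra.smul_def]
  congr 1
  ring

theorem duPsi_a : duPsi lam mu ((duOm lam (DUA.D lam mu) (DUA.U lam mu) + (mu : K)⁻¹ • 1) *
      (1 + DUA.U lam mu) - (mu : K)⁻¹ • 1) =
    single 1 (om lam mu) + single (Multiplicative.ofAdd 1) (duS lam mu) := by
  have : (duOm lam (DUA.D lam mu) (DUA.U lam mu) + (mu : K)⁻¹ • 1) *
      (1 + DUA.U lam mu) - (mu : K)⁻¹ • 1 = duOm lam (DUA.D lam mu) (DUA.U lam mu) +
      (duOm lam (DUA.D lam mu) (DUA.U lam mu) + (mu : K)⁻¹ • 1) * DUA.U lam mu := by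
    rw [mul_add, mul_one]; abel
  rw [this, map_add, map_mul, duPsi_s, duPsi_om, duPsi_U, DUB.U, single_mul_single]
  simp

theorem du_b_cancel (x y : DUA lam mu)
    (h : (duOm lam (DUA.D lam mu) (DUA.U lam mu) * duOm lam (DUA.D lam mu) (DUA.U lam mu) +
      (mu : K)⁻¹ • duOm lam (DUA.D lam mu) (DUA.U lam mu)) * x =
      (duOm lam (DUA.D lam mu) (DUA.U lam mu) * duOm lam (DUA.D lam mu) (DUA.U lam mu) +
      (mu : K)⁻¹ • duOm lam (DUA.D lam mu) (DUA.U lam mu)) * y) : x = y := by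
  apply duPsi_injective lam mu
  have := congrArg (duPsi lam mu) h
  rw [map_mul, map_mul, duPsi_b] at this
  ext g
  have := congrArg (fun z => z.coeff g) this
  simp only [coeff_single_mul, inv_one, one_mul, one_smul] at this
  exact mul_left_cancel₀ (mul_ne_zero (om_ne_zero lam mu) (duS_ne_zero lam mu)) this

theorem du_sf {K A : Type} [Field K] [Ring A] [Algebra K A] (m : K) (hm : m ≠ 0) (r U a b : A)
    (ha : a = (r + m⁻¹ • 1) * (1 + U) - m⁻¹ • 1) (hb : b = r * r + m⁻¹ • r)
    (key : r * U = U * (m • r + 1)) (hcan : ∀ x y, b * x = b * y → x = y) :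
    Nonempty ((Submodule.span Aᵐᵒᵖ {a, b} × (Fin 1 → A)) ≃ₗ[Aᵐᵒᵖ] (Fin 2 → A)) := by
  have key2 : U * r = m⁻¹ • (r * U) - m⁻¹ • U := by
    rw [key, mul_add, mul_one, mul_smul_comm, smul_add, smul_smul, inv_mul_cancel₀ hm, one_smul]
    abel
  have key3 : U * (r + m⁻¹ • 1) = m⁻¹ • (r * U) := by
    rw [mul_add, key2, mul_smul_comm, mul_one]; abel
  have ha' : a = r + (r + m⁻¹ • 1) * U := by
    rw [ha, mul_add, mul_one]; abel
  have hb1 : b = r * (r + m⁻¹ • 1) := by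
    rw [hb, mul_add, mul_smul_comm, mul_one]
  have hb2 : b = (r + m⁻¹ • 1) * r := by
    rw [hb, add_mul, smul_mul_assoc, one_mul]
  have id1 : a * (r + m⁻¹ • 1) = b * (1 + m⁻¹ • U) := by
    rw [ha', add_mul, mul_assoc _ U, key3, ← hb1, mul_add, mul_one, mul_smul_comm, mul_smul_comm,
      ← mul_assoc, ← hb2]
  have id2 : (1 + U) * (r + m⁻¹ • 1) - r * (1 + m⁻¹ • U) = m⁻¹ • 1 := by
    rw [add_mul, one_mul, key3, mul_add, mul_one, mul_smul_comm]; abel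
  have id3 : (r + m⁻¹ • 1) * (1 + U) = a + m⁻¹ • 1 := by rw [ha]; abel
  refine du_stablyFree_equiv a b (r + m⁻¹ • 1) (-(1 + m⁻¹ • U))
    (m • (1 + U)) (m • r) ?_ ?_ ?_
  · rw [id1, mul_neg, add_neg_cancel]
  · rw [mul_neg, smul_mul_assoc, smul_mul_assoc, ← sub_eq_add_neg, ← smul_sub, id2, smul_smul,
      mul_inv_cancel₀ hm, one_smul]
  · intro f g hfg
    have hf : (r + m⁻¹ • 1) * (m • (1 + U) * f + m • r * g) = f := by
      rw [mul_add, smul_mul_assoc, smul_mul_assoc, mul_smul_comm, mul_smul_comm, ← mul_assoc,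
        ← mul_assoc, id3, ← hb2, add_mul, smul_mul_assoc, one_mul, smul_add, smul_smul,
        mul_inv_cancel₀ hm, one_smul, add_right_comm, ← smul_add, hfg, smul_zero, zero_add]
    refine ⟨hf.symm, ?_⟩
    apply hcan
    rw [neg_mul, mul_neg, ← mul_assoc, ← id1, mul_assoc, hf]
    exact eq_neg_of_add_eq_zero_right hfg

theorem du_main :
    IsStablyFreeRight (DUA lam mu) (Submodule.span (DUA lam mu)ᵐᵒᵖ
      {(duOm lam (DUA.D lam mu) (DUA.U lam mu) + (mu : K)⁻¹ • 1) *
        (1 + DUA.U lam mu) - (mu : K)⁻¹ • 1,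
       duOm lam (DUA.D lam mu) (DUA.U lam mu) * duOm lam (DUA.D lam mu) (DUA.U lam mu) +
        (mu : K)⁻¹ • duOm lam (DUA.D lam mu) (DUA.U lam mu)}) ∧
    ¬ Module.Free (DUA lam mu)ᵐᵒᵖ (Submodule.span (DUA lam mu)ᵐᵒᵖ
      {(duOm lam (DUA.D lam mu) (DUA.U lam mu) + (mu : K)⁻¹ • 1) *
        (1 + DUA.U lam mu) - (mu : K)⁻¹ • 1,
       duOm lam (DUA.D lam mu) (DUA.U lam mu) * duOm lam (DUA.D lam mu) (DUA.U lam mu) +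
        (mu : K)⁻¹ • duOm lam (DUA.D lam mu) (DUA.U lam mu)}) := by
  have key := (DUA.pair lam mu).om_U
  have hcan := du_b_cancel lam mu
  have pa := duPsi_a lam mu
  have pb := duPsi_b lam mu
  generalize duOm lam (DUA.D lam mu) (DUA.U lam mu) = r at *
  generalize DUA.U lam mu = U at *
  obtain ⟨a, ha⟩ : ∃ a, a = (r + (mu : K)⁻¹ • 1) * (1 + U) - (mu : K)⁻¹ • 1 := ⟨_, rfl⟩
  obtain ⟨b, hb⟩ : ∃ b, b = r * r + (mu : K)⁻¹ • r := ⟨_, rfl⟩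
  rw [← ha] at pa
  rw [← hb] at pb hcan
  rw [← ha, ← hb]
  have e : Nonempty ((Submodule.span (DUA lam mu)ᵐᵒᵖ {a, b} × (Fin 1 → DUA lam mu))
      ≃ₗ[(DUA lam mu)ᵐᵒᵖ] (Fin 2 → DUA lam mu)) :=
    du_sf (mu : K) mu.ne_zero r U a b ha hb key hcan
  refine ⟨⟨1, 2, e⟩, ?_⟩
  intro hfree
  obtain ⟨e⟩ := e
  have h0 : DUPair lam mu (0 : K) (0 : K) := by constructor <;> simp
  obtain ⟨p, hp, hq⟩ := du_cyclic (DUA.lift lam mu h0 : DUA lam mu →+* K) _ e hfree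
  obtain ⟨q1, hq1⟩ := hq a (Submodule.subset_span (by simp))
  obtain ⟨q2, hq2⟩ := hq b (Submodule.subset_span (by simp))
  obtain ⟨f, g, hfg⟩ := Submodule.mem_span_pair.1 hp
  refine du_not_cyclic (om lam mu) (duS lam mu) _ (om_ne_zero lam mu) (duS_ne_zero lam mu)
    (duS_not_unit lam mu) (du_algebraMap_isUnit lam mu) (duS_act lam mu) ?_
    (duPsi lam mu p) (duPsi lam mu q1) (duPsi lam mu q2) (duPsi lam mu f.unop)
    (duPsi lam mu g.unop) ?_ ?_ ?_
  · rw [duS, add_sub_cancel_left]; exact du_algebraMap_isUnit lam mu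
  · rw [← pa, ← map_mul, ← hq1]
  · rw [← pb, ← map_mul, ← hq2]
  · rw [← pa, ← pb, ← map_mul, ← map_mul, ← map_add, ← hfg]; rfl

end main

/-- In `A = A(α,β,1)` with `β ≠ 0` and `λ, μ` the roots of `t² − αt − β`,
put `ω = DU − λUD`, `a = (ω + μ⁻¹)(1 + U) − μ⁻¹`, `b = ω² + μ⁻¹ω`. Then the right ideal
`aA + bA` is stably free but not free as a right `A`-module. -/
theorem downUp_explicit_nontrivial_stablyFree_right_ideal
    (K : Type) [Field K] [CharZero K] (α β lam μ : K) (hβ : β ≠ 0)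
    (hsum : lam + μ = α) (hprod : lam * μ = -β) :
    IsStablyFreeRight (DownUp K α β 1)
      (Submodule.span (DownUp K α β 1)ᵐᵒᵖ
        {((DownUp.D K α β 1 * DownUp.U K α β 1 -
              lam • (DownUp.U K α β 1 * DownUp.D K α β 1)) + μ⁻¹ • 1) *
            (1 + DownUp.U K α β 1) - μ⁻¹ • 1,
         (DownUp.D K α β 1 * DownUp.U K α β 1 -
              lam • (DownUp.U K α β 1 * DownUp.D K α β 1)) *
            (DownUp.D K α β 1 * DownUp.U K α β 1 -
              lam • (DownUp.U K α β 1 * DownUp.D K α β 1)) +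
          μ⁻¹ • (DownUp.D K α β 1 * DownUp.U K α β 1 -
              lam • (DownUp.U K α β 1 * DownUp.D K α β 1))}) ∧
    ¬ Module.Free (DownUp K α β 1)ᵐᵒᵖ
      (Submodule.span (DownUp K α β 1)ᵐᵒᵖ
        {((DownUp.D K α β 1 * DownUp.U K α β 1 -
              lam • (DownUp.U K α β 1 * DownUp.D K α β 1)) + μ⁻¹ • 1) *
            (1 + DownUp.U K α β 1) - μ⁻¹ • 1,
         (DownUp.D K α β 1 * DownUp.U K α β 1 -
              lam • (DownUp.U K α β 1 * DownUp.D K α β 1)) *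
            (DownUp.D K α β 1 * DownUp.U K α β 1 -
              lam • (DownUp.U K α β 1 * DownUp.D K α β 1)) +
          μ⁻¹ • (DownUp.D K α β 1 * DownUp.U K α β 1 -
              lam • (DownUp.U K α β 1 * DownUp.D K α β 1))}) := by
  have hprod0 : lam * μ ≠ 0 := by rw [hprod]; exact neg_ne_zero.2 hβ
  have hb : β = -(lam * μ) := by rw [hprod, neg_neg]
  subst hsum hb
  exact du_main (Units.mk0 lam (left_ne_zero_of_mul hprod0))
    (Units.mk0 μ (right_ne_zero_of_mul hprod0))
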